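/- If S = {s_1 < ... < s_n} is a convex set, then |D_{{1,2,4}}(S)| ≥ (5/4)n - 2, where D_{{1,2,4}}(S) = {s_x - s_y : x - y ∈ {1,2,4}}. -/

import Mathlib

/-- `DI I n s` is the set `{s x - s y : x - y ∈ I, 1 ≤ y, x ≤ n}`. -/
noncomputable def DI (I : Finset ℕ) (n : ℕ) (s : ℕ → ℝ) : Finset ℝ :=
  ((Finset.Icc 1 n ×ˢ Finset.Icc 1 n).filter
    (fun p => p.2 < p.1 ∧ p.1 - p.2 ∈ I)).image (fun p => s p.1 - s p.2)

open Finset in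
theorem aux_card_le (b : ℕ → ℝ) (hb : StrictMono b) (J : Finset ℕ) (Q : Finset ℝ)
    (h : ∀ i ∈ J, ∃ x ∈ Q, b i < x ∧ x < b (i + 1)) : J.card ≤ Q.card := by
  choose! f hf using h
  refine Finset.card_le_card_of_injOn f (fun i hi => (hf i hi).1) ?_
  intro i hi j hj hij
  have h1 := (hf i hi).2
  have h2 := (hf j hj).2
  rw [hij] at h1
  have h3 := hb.lt_iff_lt.1 (h1.1.trans h2.2)
  have h4 := hb.lt_iff_lt.1 (h2.1.trans h1.2)
  omega

theorem aux_core (d : ℕ → ℝ) (hd : StrictMono d) (hpos : 0 < d 0) (N : ℕ) (hN : 4 ≤ N) :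
    5 * N ≤ 4 * ((Finset.range N).image d ∪ (Finset.range (N - 1)).image (fun i => d i + d (i + 1))
      ∪ (Finset.range (N - 3)).image
        (fun i => d i + d (i + 1) + (d (i + 2) + d (i + 3)))).card := by
  classical
  set b : ℕ → ℝ := fun i => d i + d (i + 1) with hbdef
  set c : ℕ → ℝ := fun i => d i + d (i + 1) + (d (i + 2) + d (i + 3)) with hcdef
  have hb : StrictMono b := fun i j hij => add_lt_add (hd hij) (hd (by omega))
  have hcb : ∀ i, c i = b i + b (i + 2) := fun i => rfl
  have hc : StrictMono c := fun i j hij => by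
    rw [hcb, hcb]; exact add_lt_add (hb hij) (hb (by omega))
  have hp : ∀ i, 0 < d i := fun i => hpos.trans_le (hd.monotone (Nat.zero_le i))
  have hd1b : ∀ i, d 1 < b i := fun i => by
    have h1 : b 0 ≤ b i := hb.monotone (Nat.zero_le i)
    have h2 : b 0 = d 0 + d 1 := rfl
    linarith
  have hd01 : d 0 < d 1 := hd (by omega)
  set A := (Finset.range N).image d with hA
  set B := (Finset.range (N - 1)).image b with hB
  set C := (Finset.range (N - 3)).image c with hC
  have cA : A.card = N := by rw [hA, Finset.card_image_of_injective _ hd.injective]; simp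
  have cB : B.card = N - 1 := by rw [hB, Finset.card_image_of_injective _ hb.injective]; simp
  have cC : C.card = N - 3 := by rw [hC, Finset.card_image_of_injective _ hc.injective]; simp
  set Q := (A \ B).filter (fun x => d 1 < x) with hQ
  have hQ2 : Q.card + 2 ≤ (A \ B).card := by
    have hpair : ({d 0, d 1} : Finset ℝ).card = 2 := Finset.card_pair hd01.ne
    have hdis : Disjoint Q {d 0, d 1} := by
      rw [Finset.disjoint_left]
      intro x hx hx'
      have h1 := (Finset.mem_filter.1 hx).2
      simp only [Finset.mem_insert, Finset.mem_singleton] at hx'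
      rcases hx' with rfl | rfl <;> linarith
    rw [← hpair, ← Finset.card_union_of_disjoint hdis]
    apply Finset.card_le_card
    intro x hx
    rcases Finset.mem_union.1 hx with hx | hx
    · exact (Finset.mem_filter.1 hx).1
    · have hnb : ∀ y, y ≤ d 1 → y ∉ B := by
        intro y hy hyB
        obtain ⟨i, _, rfl⟩ := Finset.mem_image.1 hyB
        exact absurd (hd1b i) (not_lt.2 hy)
      simp only [Finset.mem_insert, Finset.mem_singleton] at hx
      rcases hx with rfl | rfl
      · exact Finset.mem_sdiff.2 ⟨Finset.mem_image.2 ⟨0, by simp; omega, rfl⟩, hnb _ hd01.le⟩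
      · exact Finset.mem_sdiff.2 ⟨Finset.mem_image.2 ⟨1, by simp; omega, rfl⟩, hnb _ le_rfl⟩
  have hCA : (C ∩ (A \ B)).card ≤ Q.card := by
    apply Finset.card_le_card
    intro x hx
    obtain ⟨h1, h2⟩ := Finset.mem_inter.1 hx
    obtain ⟨i, _, rfl⟩ := Finset.mem_image.1 h1
    refine Finset.mem_filter.2 ⟨h2, ?_⟩
    have := hcb i
    have := hd1b i
    have := hd1b (i + 2)
    have := hp 1
    linarith
  set I := (Finset.range (N - 3)).filter (fun i => c i ∈ B) with hI
  have hCB : (C ∩ B).card ≤ I.card := by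
    have : C ∩ B ⊆ I.image c := by
      intro x hx
      obtain ⟨h1, h2⟩ := Finset.mem_inter.1 hx
      obtain ⟨i, hi, rfl⟩ := Finset.mem_image.1 h1
      exact Finset.mem_image.2 ⟨i, Finset.mem_filter.2 ⟨hi, h2⟩, rfl⟩
    exact (Finset.card_le_card this).trans Finset.card_image_le
  set I1 := (Finset.range (N - 3)).filter (fun i => b (i + 1) ∉ A) with hI1
  set I2 := (Finset.range (N - 3)).filter (fun i => ∃ x ∈ Q, b i < x ∧ x < b (i + 1)) with hI2
  set I3 := (Finset.range (N - 3)).filter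
    (fun i => ∃ x ∈ Q, b (i + 1) < x ∧ x < b (i + 1 + 1)) with hI3
  have c1 : I1.card ≤ (B \ A).card := by
    refine Finset.card_le_card_of_injOn (fun i => b (i + 1)) ?_ ?_
    · intro i hi
      obtain ⟨h1, h2⟩ := Finset.mem_filter.1 (Finset.mem_coe.1 hi)
      have h1 := Finset.mem_range.1 h1
      exact Finset.mem_coe.2 (Finset.mem_sdiff.2
        ⟨Finset.mem_image.2 ⟨i + 1, Finset.mem_range.2 (by omega), rfl⟩, h2⟩)
    · intro i _ j _ hij
      have := hb.injective hij
      omega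
  have c2 : I2.card ≤ Q.card := aux_card_le b hb I2 Q (fun i hi => (Finset.mem_filter.1 hi).2)
  have c3 : I3.card ≤ Q.card :=
    aux_card_le (fun i => b (i + 1)) (fun i j hij => hb (by omega)) I3 Q
      (fun i hi => (Finset.mem_filter.1 hi).2)
  have hsub : I ⊆ I1 ∪ I2 ∪ I3 := by
    intro i hi
    obtain ⟨hiN, hiB⟩ := Finset.mem_filter.1 hi
    by_contra hcon
    simp only [Finset.mem_union, not_or] at hcon
    obtain ⟨⟨n1, n2⟩, n3⟩ := hcon
    have m1 : b (i + 1) ∈ A := by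
      by_contra h
      exact n1 (Finset.mem_filter.2 ⟨hiN, h⟩)
    -- every element of A strictly between b i and b (i+2) is b (i+1)
    have key : ∀ x ∈ A, b i < x → x < b (i + 2) → x = b (i + 1) := by
      intro x hxA h1 h2
      by_contra hne
      by_cases hxB : x ∈ B
      · obtain ⟨j, _, rfl⟩ := Finset.mem_image.1 hxB
        have h3 := hb.lt_iff_lt.1 h1
        have h4 := hb.lt_iff_lt.1 h2
        have : j = i + 1 := by omega
        exact hne (by rw [this])
      · have hxQ : x ∈ Q :=
          Finset.mem_filter.2 ⟨Finset.mem_sdiff.2 ⟨hxA, hxB⟩, (hd1b i).trans h1⟩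
        rcases lt_or_gt_of_ne hne with h | h
        · exact n2 (Finset.mem_filter.2 ⟨hiN, x, hxQ, h1, h⟩)
        · exact n3 (Finset.mem_filter.2 ⟨hiN, x, hxQ, h, h2⟩)
    obtain ⟨m, hm, hmb⟩ := Finset.mem_image.1 m1
    obtain ⟨l, hl, hlc⟩ := Finset.mem_image.1 hiB
    have hm := Finset.mem_range.1 hm
    have hl := Finset.mem_range.1 hl
    rw [hcb] at hlc
    have hb1 : b i < b (i + 1) := hb (by omega)
    have hb2 : b (i + 1) < b (i + 2) := hb (by omega)
    have hbl : b l = d l + d (l + 1) := rfl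
    rcases lt_or_ge l m with hlm | hlm
    · have e1 : d l < d m := hd hlm
      have e2 : d (l + 1) ≤ d m := hd.monotone hlm
      have e3 : d l ≤ b i := by
        by_contra h
        have := key (d l) (Finset.mem_image.2 ⟨l, Finset.mem_range.2 (by omega), rfl⟩)
          (not_le.1 h) (by linarith)
        linarith
      linarith
    · have e1 : d m < d (l + 1) := hd (by omega)
      have e2 : d m ≤ d l := hd.monotone hlm
      have e3 : b (i + 2) ≤ d (l + 1) := by
        by_contra h
        have := key (d (l + 1)) (Finset.mem_image.2 ⟨l + 1, Finset.mem_range.2 (by omega), rfl⟩)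
          (by linarith) (not_le.1 h)
        linarith
      linarith
  have cI : I.card ≤ I1.card + I2.card + I3.card :=
    (Finset.card_le_card hsub).trans ((Finset.card_union_le _ _).trans
      (Nat.add_le_add_right (Finset.card_union_le _ _) _))
  have u1 : (A ∪ B).card = A.card + (B \ A).card := by
    rw [← Finset.union_sdiff_self_eq_union, Finset.card_union_of_disjoint Finset.disjoint_sdiff]
  have u2 : (A ∪ B ∪ C).card = (A ∪ B).card + (C \ (A ∪ B)).card := by
    rw [← Finset.union_sdiff_self_eq_union, Finset.card_union_of_disjoint Finset.disjoint_sdiff]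
  have u3 : C.card ≤ (C \ (A ∪ B)).card + (C ∩ B).card + (C ∩ (A \ B)).card := by
    have : C ⊆ (C \ (A ∪ B)) ∪ (C ∩ B) ∪ (C ∩ (A \ B)) := by
      intro x hx
      simp only [Finset.mem_union, Finset.mem_sdiff, Finset.mem_inter]
      tauto
    exact (Finset.card_le_card this).trans ((Finset.card_union_le _ _).trans
      (Nat.add_le_add_right (Finset.card_union_le _ _) _))
  have u4 := Finset.card_sdiff_add_card_inter A B
  have u5 := Finset.card_sdiff_add_card_inter B A
  rw [Finset.inter_comm] at u5
  omega

theorem aux_mem (n : ℕ) (s : ℕ → ℝ) (k i : ℕ) (hk : k ∈ ({1, 2, 4} : Finset ℕ))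
    (hk0 : 0 < k) (hi : i + 1 + k ≤ n) : s (i + 1 + k) - s (i + 1) ∈ DI {1, 2, 4} n s := by
  unfold DI
  refine Finset.mem_image.2 ⟨(i + 1 + k, i + 1), ?_, rfl⟩
  simp only [Finset.mem_filter, Finset.mem_product, Finset.mem_Icc]
  refine ⟨by omega, by omega, ?_⟩
  rwa [Nat.add_sub_cancel_left]

/-- If S is a convex set, then |D_{{1,2,4}}(S)| ≥ (5/4)n - 2. -/
theorem card_D124_of_convex (n : ℕ) (s : ℕ → ℝ)
    (hmono : ∀ i, 1 ≤ i → i + 1 ≤ n → s i < s (i + 1))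
    (hconv : ∀ i, 1 ≤ i → i + 2 ≤ n → s (i + 1) - s i < s (i + 2) - s (i + 1)) :
    (5 / 4 : ℝ) * n - 2 ≤ ((DI {1, 2, 4} n s).card : ℝ) := by
  classical
  rcases Nat.lt_or_ge n 2 with hn | hn
  · have : (n : ℝ) ≤ 1 := by exact_mod_cast (by omega : n ≤ 1)
    have : (0 : ℝ) ≤ ((DI {1, 2, 4} n s).card : ℝ) := Nat.cast_nonneg _
    linarith
  obtain ⟨N, rfl⟩ : ∃ N, n = N + 2 := ⟨n - 2, by omega⟩
  -- difference sequence, extended past the end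
  set d : ℕ → ℝ := fun i => if i ≤ N then s (i + 2) - s (i + 1)
    else s (N + 2) - s (N + 1) + ((i : ℝ) - N) with hd
  have hdl : ∀ i, i ≤ N → d i = s (i + 2) - s (i + 1) := fun i hi => by simp [hd, hi]
  have hdm : StrictMono d := by
    apply strictMono_nat_of_lt_succ
    intro i
    rcases Nat.lt_trichotomy i N with h | h | h
    · rw [hdl i h.le, hdl (i + 1) h]
      exact hconv (i + 1) (by omega) (by omega)
    · subst h
      simp [hd]
    · have h1 : ¬ i ≤ N := by omega
      have h2 : ¬ i + 1 ≤ N := by omega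
      simp [hd, h1, h2]
  have hpos : 0 < d 0 := by
    rw [hdl 0 (Nat.zero_le _)]
    exact sub_pos.2 (hmono 1 le_rfl (by omega))
  have hAm : (Finset.range (N + 1)).image d ⊆ DI {1, 2, 4} (N + 2) s := by
    intro x hx
    obtain ⟨i, hi, rfl⟩ := Finset.mem_image.1 hx
    have hi := Finset.mem_range.1 hi
    rw [hdl i (by omega)]
    exact aux_mem (N + 2) s 1 i (by simp) (by omega) (by omega)
  rcases Nat.lt_or_ge N 3 with hN | hN
  · have h1 := Finset.card_le_card hAm
    rw [Finset.card_image_of_injective _ hdm.injective, Finset.card_range] at h1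
    have h2 : ((N + 1 : ℕ) : ℝ) ≤ ((DI {1, 2, 4} (N + 2) s).card : ℝ) := by exact_mod_cast h1
    have h3 : (N : ℝ) ≤ 2 := by exact_mod_cast (by omega : N ≤ 2)
    push_cast at h2 ⊢
    linarith
  · have h1 := aux_core d hdm hpos (N + 1) (by omega)
    have h2 : (Finset.range (N + 1)).image d
        ∪ (Finset.range (N + 1 - 1)).image (fun i => d i + d (i + 1))
        ∪ (Finset.range (N + 1 - 3)).image
          (fun i => d i + d (i + 1) + (d (i + 2) + d (i + 3))) ⊆ DI {1, 2, 4} (N + 2) s := by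
      refine Finset.union_subset (Finset.union_subset hAm ?_) ?_
      · intro x hx
        obtain ⟨i, hi, rfl⟩ := Finset.mem_image.1 hx
        have hi := Finset.mem_range.1 hi
        have := aux_mem (N + 2) s 2 i (by simp) (by omega) (by omega)
        convert this using 1
        simp only [hdl i (by omega), hdl (i + 1) (by omega), add_assoc]
        norm_num
      · intro x hx
        obtain ⟨i, hi, rfl⟩ := Finset.mem_image.1 hx
        have hi := Finset.mem_range.1 hi
        have := aux_mem (N + 2) s 4 i (by simp) (by omega) (by omega)
        convert this using 1
        simp only [hdl i (by omega), hdl (i + 1) (by omega), hdl (i + 2) (by omega),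
          hdl (i + 3) (by omega), add_assoc]
        norm_num
    have h3 := h1.trans (Nat.mul_le_mul_left 4 (Finset.card_le_card h2))
    have h4 : (5 : ℝ) * (N + 1) ≤ 4 * ((DI {1, 2, 4} (N + 2) s).card : ℝ) := by exact_mod_cast h3
    push_cast
    linarith
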